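/- Suppose S ⊆ ℤ/qℤ with |S| > (11/32)q. Then S + S contains a quadratic residue modulo q, i.e. there exist s, s' ∈ S and x ∈ ℤ/qℤ with s + s' = x². -/

import Mathlib

def St (a b : ℝ) : Prop := (a ≤ 1/3 ∧ 2*a+b ≤ 1) ∨ (b ≤ 1/3 ∧ a+2*b ≤ 1)

def Mx (X A B : ℝ) : Prop :=
  (A ≤ 1/3 ∧ B ≤ 1/3) ∨ (1/3 ≤ A ∧ B ≤ A ∧ X ≤ (1+A)/2) ∨ (1/3 ≤ B ∧ A ≤ B ∧ X ≤ (1+B)/2)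

lemma Mx_of (X A B : ℝ) (h : ∀ C, 1/3 ≤ C → A ≤ C → B ≤ C → X ≤ (1+C)/2) : Mx X A B := by
  rcases le_total A B with h1 | h1
  · rcases le_total (1/3) B with h2 | h2
    · exact Or.inr (Or.inr ⟨h2, h1, h B h2 h1 le_rfl⟩)
    · exact Or.inl ⟨by linarith, h2⟩
  · rcases le_total (1/3) A with h2 | h2
    · exact Or.inr (Or.inl ⟨h2, h1, h A h2 le_rfl h1⟩)
    · exact Or.inl ⟨h2, by linarith⟩

lemma St.sum {a b C : ℝ} (h : St a b) (_hC : 1/3 ≤ C) (ha : a ≤ C) (hb : b ≤ C) :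
    a + b ≤ (1+C)/2 := by
  rcases h with ⟨h1, h2⟩ | ⟨h1, h2⟩ <;> linarith

lemma St.loop {a : ℝ} (h : St a a) : a ≤ 1/3 := by
  rcases h with ⟨h1, h2⟩ | ⟨h1, h2⟩ <;> linarith

lemma pair_caps (p q : Fin 4 → ℝ) (h : ∀ i j, St (p i) (q j)) (hp : ∀ i, p i ≤ 1)
    (hq : ∀ i, q i ≤ 1) :
    ∃ A E : ℝ, (∀ i, p i ≤ A) ∧ (∀ i, q i ≤ E) ∧
      ((1/3 ≤ A ∧ A ≤ 1 ∧ 2*E = 1 - A) ∨ (1/3 ≤ E ∧ E ≤ 1 ∧ 2*A = 1 - E)) := by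
  obtain ⟨i, hi⟩ := Finite.exists_max p
  obtain ⟨j, hj⟩ := Finite.exists_max q
  by_cases h1 : 1/3 < p i
  · refine ⟨p i, (1 - p i)/2, hi, fun k => ?_, Or.inl ⟨h1.le, hp i, by ring⟩⟩
    rcases h i k with h | h <;> linarith [h.1, h.2]
  · by_cases h2 : 1/3 < q j
    · refine ⟨(1 - q j)/2, q j, fun k => ?_, hj, Or.inr ⟨h2.le, hq j, by ring⟩⟩
      rcases h k j with h | h <;> linarith [h.1, h.2]
    · exact ⟨1/3, 1/3, fun k => by linarith [hi k], fun k => by linarith [hj k],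
        Or.inl ⟨le_rfl, by norm_num, by norm_num⟩⟩

lemma Mx.two {X A B : ℝ} (h : Mx X A B) (hX : X ≤ A + B) :
    (B ≤ A ∧ X ≤ (1+A)/2) ∨ (A ≤ B ∧ X ≤ (1+B)/2) := by
  rcases h with ⟨h1, h2⟩ | ⟨h1, h2, h3⟩ | ⟨h1, h2, h3⟩
  · rcases le_total A B with h | h
    · exact Or.inr ⟨h, by linarith⟩
    · exact Or.inl ⟨h, by linarith⟩
  · exact Or.inl ⟨h2, h3⟩
  · exact Or.inr ⟨h2, h3⟩

lemma E26 (a2 a10 a18 a26 a6 a14 a22 a30 c2 c10 c18 c26 c6 c14 c22 c30 : ℝ)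
    (l2 : a2 ≤ c2) (l10 : a10 ≤ c10) (l18 : a18 ≤ c18) (l26 : a26 ≤ c26)
    (l6 : a6 ≤ c6) (l14 : a14 ≤ c14) (l22 : a22 ≤ c22) (l30 : a30 ≤ c30)
    (u6 : c6 ≤ 1) (u14 : c14 ≤ 1) (u22 : c22 ≤ 1) (u30 : c30 ≤ 1) (u10 : c10 ≤ 1) (u26 : c26 ≤ 1)
    (s2 : c2 ≤ 1/3) (s18 : c18 ≤ 1/3) (s6 : St c6 c30) (s14 : St c14 c22) (s10 : St c10 c26)
    (m1 : Mx (a2+a14) c2 c14) (m2 : Mx (a18+a30) c18 c30) (m3 : Mx (a6+a10) c6 c10)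
    (m4 : Mx (a22+a26) c22 c26)
    (w1 : a2 + a30 ≤ 1) (w2 : a18+a14 ≤ 1) (w3 : a6 + a26 ≤ 1) (w4 : a22+a10 ≤ 1) :
    a2+a10+a18+a26+a6+a14+a22+a30 ≤ 3 := by
  replace m1 := m1.two (by linarith only [l2, l14])
  replace m2 := m2.two (by linarith only [l18, l30])
  replace m3 := m3.two (by linarith only [l6, l10])
  replace m4 := m4.two (by linarith only [l22, l26])
  rcases s6 with ⟨s6a1, s6a2⟩ | ⟨s6b1, s6b2⟩
  · rcases s10 with ⟨s10a1, s10a2⟩ | ⟨s10b1, s10b2⟩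
    · rcases s14 with ⟨s14a1, s14a2⟩ | ⟨s14b1, s14b2⟩
      · rcases m4 with ⟨m4a, m4b⟩ | ⟨m4c, m4d⟩
        · linarith only [l2, l10, l18, l6, l14, l30, s2, s18, w1, s6a2, s10a1, s14a2, m4b]
        · linarith only [l2, l10, l18, l6, l14, l30, s2, s18, w1, s6a2, s10a2, s14a1, m4d]
      · rcases m2 with ⟨m2a, m2b⟩ | ⟨m2c, m2d⟩
        · linarith only [l2, l10, l18, l26, l6, l14, l22, l30, s2, s18, w2, w3, s6a2, s10a2, s14b2, m2a]
        · rcases m1 with ⟨m1a, m1b⟩ | ⟨m1c, m1d⟩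
          · linarith only [l2, l10, l26, l6, l14, l22, u30, s2, w3, s6a2, s10a2, s14b2, m2d, m1a]
          · linarith only [l10, l26, l6, l22, u30, w3, s6a2, s10a2, s14b2, m2d, m1d]
    · rcases s14 with ⟨s14a1, s14a2⟩ | ⟨s14b1, s14b2⟩
      · linarith only [l2, l10, l18, l26, l6, l14, l22, l30, s2, s18, w1, w4, s6a2, s10b2, s14a2]
      · rcases m1 with ⟨m1a, m1b⟩ | ⟨m1c, m1d⟩
        · linarith only [l2, l10, l18, l26, l6, l14, l22, l30, s2, s18, w1, w4, s6a2, s10b2, s14b2, m1a]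
        · rcases m2 with ⟨m2a, m2b⟩ | ⟨m2c, m2d⟩
          · linarith only [l2, l10, l18, l26, l6, l22, l30, s2, s18, w2, w4, s6a2, s10b2, s14b2, m1d, m2a]
          · linarith only [l10, l26, l6, l22, u14, w4, s6a2, s10b2, s14b2, m1d, m2d]
  · rcases s14 with ⟨s14a1, s14a2⟩ | ⟨s14b1, s14b2⟩
    · rcases s10 with ⟨s10a1, s10a2⟩ | ⟨s10b1, s10b2⟩
      · rcases m4 with ⟨m4a, m4b⟩ | ⟨m4c, m4d⟩
        · linarith only [l2, l10, l18, l6, l14, l22, l30, s2, s18, w3, w4, s6b2, s14a2, s10a1, m4b]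
        · linarith only [l2, l10, l18, l26, l6, l14, l22, l30, s2, s18, w3, s6b2, s14a2, s10a2, m4c, m4d]
      · rcases m3 with ⟨m3a, m3b⟩ | ⟨m3c, m3d⟩
        · linarith only [l2, l18, l26, l6, l14, l22, l30, s2, s18, w3, w4, s6b2, s14a2, s10b1, m3b]
        · linarith only [l2, l10, l18, l26, l6, l14, l22, l30, s2, s18, w4, s6b2, s14a2, s10b2, m3c, m3d]
    · rcases s10 with ⟨s10a1, s10a2⟩ | ⟨s10b1, s10b2⟩
      · linarith only [l2, l10, l18, l26, l6, l14, l22, l30, s2, s18, w2, w3, s6b2, s14b2, s10a2]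
      · rcases m3 with ⟨m3a, m3b⟩ | ⟨m3c, m3d⟩
        · linarith only [l2, l18, l26, l14, l22, l30, s2, s18, w2, s6b2, s14b2, s10b1, m3b]
        · linarith only [l2, l18, l26, l14, l22, l30, s2, s18, w2, s6b1, s14b2, s10b2, m3d]

lemma E04 (a0 a8 a16 a24 a4 a12 a20 a28 c0 c8 c16 c24 c4 c12 c20 c28 : ℝ)
    (l0 : a0 ≤ c0) (l8 : a8 ≤ c8) (l16 : a16 ≤ c16) (l24 : a24 ≤ c24)
    (l4 : a4 ≤ c4) (l12 : a12 ≤ c12) (l20 : a20 ≤ c20) (l28 : a28 ≤ c28)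
    (u0 : c0 ≤ 1) (u8 : c8 ≤ 1) (u16 : c16 ≤ 1) (u24 : c24 ≤ 1)
    (u4 : c4 ≤ 1) (u12 : c12 ≤ 1) (u20 : c20 ≤ 1) (u28 : c28 ≤ 1)
    (s0 : St c0 c4) (s8 : St c8 c28) (s24 : St c24 c12) (s16 : St c16 c20)
    (m0 : Mx (a0+a16) c0 c16) (m4 : Mx (a4+a12) c4 c12) (m20 : Mx (a20+a28) c20 c28)
    (m8 : Mx (a8+a8) c8 c8) (m24 : Mx (a24+a24) c24 c24)
    (w0 : a0 + a0 ≤ 1) (w16 : a16+a16 ≤ 1) (w4 : a4 + a28 ≤ 1) (w8 : a8+a24 ≤ 1)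
    (w12 : a12 + a20 ≤ 1) :
    a0+a8+a16+a24+a4+a12+a20+a28 ≤ 3 := by
  have n8 : a8 ≤ (1+c8)/4 := by
    rcases m8 with ⟨_, _⟩ | ⟨_, _, _⟩ | ⟨_, _, _⟩ <;> linarith
  have n24 : a24 ≤ (1+c24)/4 := by
    rcases m24 with ⟨_, _⟩ | ⟨_, _, _⟩ | ⟨_, _, _⟩ <;> linarith
  replace m0 := m0.two (by linarith only [l0, l16])
  replace m4 := m4.two (by linarith only [l4, l12])
  replace m20 := m20.two (by linarith only [l20, l28])
  rcases s0 with ⟨s0a1, s0a2⟩ | ⟨s0b1, s0b2⟩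
  · rcases s8 with ⟨s8a1, s8a2⟩ | ⟨s8b1, s8b2⟩
    · rcases s24 with ⟨s24a1, s24a2⟩ | ⟨s24b1, s24b2⟩
      · rcases s16 with ⟨s16a1, s16a2⟩ | ⟨s16b1, s16b2⟩
        · linarith only [l0, l8, l16, l24, l4, l12, l20, l28, w4, w12, s0a2, s8a2, s24a2, s16a2]
        · rcases m4 with ⟨m4a, m4b⟩ | ⟨m4c, m4d⟩
          · linarith only [l0, l8, l16, l24, l4, l12, l20, l28, w16, w4, s0a2, s8a2, s24a2, s16b2, m4a, m4b]
          · rcases m0 with ⟨m0a, m0b⟩ | ⟨m0c, m0d⟩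
            · linarith only [l0, l8, l16, l24, l12, l20, l28, w4, w12, s0a1, s8a2, s24a2, s16b2, m4d, m0b]
            · linarith only [l0, l8, l24, l12, l20, l28, w16, w4, w12, s0a1, s8a2, s24a2, s16b2, m4d, m0d]
      · rcases s16 with ⟨s16a1, s16a2⟩ | ⟨s16b1, s16b2⟩
        · linarith only [l0, l8, l16, l4, l12, l20, l28, w4, w12, n24, s0a2, s8a2, s24b2, s16a2]
        · linarith only [l0, l8, l16, l24, l4, l12, l20, l28, w16, w4, n24, s0a2, s8a2, s24b2, s16b2]
    · rcases m0 with ⟨m0a, m0b⟩ | ⟨m0c, m0d⟩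
      · rcases s24 with ⟨s24a1, s24a2⟩ | ⟨s24b1, s24b2⟩
        · linarith only [l0, l8, l16, l4, l28, w12, n8, n24, s0a2, s8b2, m0a, s24a1]
        · rcases s16 with ⟨s16a1, s16a2⟩ | ⟨s16b1, s16b2⟩
          · linarith only [l0, l16, l4, l12, l20, l28, w4, w12, n8, n24, s0a2, s8b2, s24b2, s16a2]
          · linarith only [l0, l8, l16, l24, l4, l12, l20, l28, n8, n24, s0a2, s8b2, m0a, s24b2, s16b1]
      · rcases s24 with ⟨s24a1, s24a2⟩ | ⟨s24b1, s24b2⟩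
        · rcases s16 with ⟨s16a1, s16a2⟩ | ⟨s16b1, s16b2⟩
          · linarith only [l0, l16, l24, l4, l12, l20, l28, w4, w12, n8, s0a2, s8b2, s24a2, s16a2]
          · rcases m4 with ⟨m4a, m4b⟩ | ⟨m4c, m4d⟩
            · linarith only [l0, l8, l16, l24, l20, l28, w16, n8, s0a2, s8b2, s24a1, s16b2, m4b]
            · linarith only [l8, l24, l20, l28, n8, s8b2, m0d, s24a2, s16b2, m4d]
        · rcases s16 with ⟨s16a1, s16a2⟩ | ⟨s16b1, s16b2⟩
          · linarith only [l0, l16, l4, l12, l20, l28, w4, w12, n8, n24, s0a2, s8b2, s24b2, s16a2]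
          · linarith only [l0, l16, l24, l4, l12, l20, l28, w16, w4, n8, n24, s0a2, s8b2, s24b2, s16b2]
  · rcases s8 with ⟨s8a1, s8a2⟩ | ⟨s8b1, s8b2⟩
    · rcases s24 with ⟨s24a1, s24a2⟩ | ⟨s24b1, s24b2⟩
      · rcases s16 with ⟨s16a1, s16a2⟩ | ⟨s16b1, s16b2⟩
        · rcases m20 with ⟨m20a, m20b⟩ | ⟨m20c, m20d⟩
          · linarith only [l0, l8, l16, l24, l4, l12, l20, l28, w0, w12, s0b2, s8a2, s24a2, s16a2, m20a, m20b]
          · rcases m0 with ⟨m0a, m0b⟩ | ⟨m0c, m0d⟩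
            · linarith only [l8, l16, l24, l4, l12, l28, w0, w4, w12, s0b2, s8a2, s24a2, s16a1, m20d, m0b]
            · linarith only [l0, l8, l16, l24, l4, l12, l28, w4, w12, s0b2, s8a2, s24a2, s16a1, m20d, m0d]
        · rcases m4 with ⟨m4a, m4b⟩ | ⟨m4c, m4d⟩
          · linarith only [l0, l8, l16, l24, l4, l12, l20, l28, w0, w16, w4, s0b2, s8a2, s24a1, s16b2, m4a]
          · rcases m20 with ⟨m20a, m20b⟩ | ⟨m20c, m20d⟩
            · linarith only [l8, l16, l24, l20, l28, w0, s8a1, s24a2, s16b2, m4d, m20a]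
            · linarith only [l8, l24, w0, w16, s8a2, s24a2, m4d, m20d]
      · rcases m20 with ⟨m20a, m20b⟩ | ⟨m20c, m20d⟩
        · rcases s16 with ⟨s16a1, s16a2⟩ | ⟨s16b1, s16b2⟩
          · linarith only [l0, l8, l16, l24, l4, l12, w0, n24, s0b2, s8a1, s24b2, m20b, s16a2]
          · linarith only [l0, l8, l16, l24, l4, l12, l20, l28, w0, n24, s0b2, s8a1, s24b2, m20a, s16b2]
        · linarith only [l0, l8, l24, l4, l12, w0, w16, n24, s0b2, s8a2, s24b2, m20d]
    · rcases m0 with ⟨m0a, m0b⟩ | ⟨m0c, m0d⟩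
      · rcases s24 with ⟨s24a1, s24a2⟩ | ⟨s24b1, s24b2⟩
        · linarith only [l8, l4, l28, w12, n8, n24, s0b2, s8b2, m0b, s24a1]
        · rcases s16 with ⟨s16a1, s16a2⟩ | ⟨s16b1, s16b2⟩
          · linarith only [l0, l8, l16, l4, l12, l20, l28, w0, w12, n8, n24, s0b2, s8b2, s24b2, s16a2]
          · linarith only [l8, l24, l4, l12, l20, l28, n8, n24, s0b2, s8b2, m0b, s24b2, s16b1]
      · rcases s16 with ⟨s16a1, s16a2⟩ | ⟨s16b1, s16b2⟩
        · rcases s24 with ⟨s24a1, s24a2⟩ | ⟨s24b1, s24b2⟩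
          · linarith only [l0, l8, l16, l24, l4, l12, l20, l28, w12, n8, s0b2, s8b2, m0c, m0d, s16a2, s24a2]
          · linarith only [l0, l8, l16, l24, l4, l12, l20, l28, n8, n24, s0b1, s8b2, m0c, s16a2, s24b2]
        · rcases s24 with ⟨s24a1, s24a2⟩ | ⟨s24b1, s24b2⟩
          · linarith only [l0, l8, l24, l4, l12, l20, l28, w16, w12, n8, s0b2, s8b2, m0d, s16b2, s24a2]
          · linarith only [l8, l24, l4, l12, l20, l28, n8, n24, s0b1, s8b2, m0d, s16b2, s24b2]

lemma Umain (X0 X1 X2 X3 X4 X5 X6 X7 C0 C1 C2 C3 C4 C5 C6 C7 : ℝ)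
    (l0 : X0 ≤ 4*C0) (l1 : X1 ≤ 4*C1) (l2 : X2 ≤ 4*C2) (l3 : X3 ≤ 4*C3)
    (l4 : X4 ≤ 4*C4) (l5 : X5 ≤ 4*C5) (l6 : X6 ≤ 4*C6) (l7 : X7 ≤ 4*C7)
    (p10 : (1/3 ≤ C1 ∧ C1 ≤ 1 ∧ 2*C0 = 1 - C1) ∨ (1/3 ≤ C0 ∧ C0 ≤ 1 ∧ 2*C1 = 1 - C0))
    (p36 : (1/3 ≤ C3 ∧ C3 ≤ 1 ∧ 2*C6 = 1 - C3) ∨ (1/3 ≤ C6 ∧ C6 ≤ 1 ∧ 2*C3 = 1 - C6))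
    (p54 : (1/3 ≤ C5 ∧ C5 ≤ 1 ∧ 2*C4 = 1 - C5) ∨ (1/3 ≤ C4 ∧ C4 ≤ 1 ∧ 2*C5 = 1 - C4))
    (p72 : (1/3 ≤ C7 ∧ C7 ≤ 1 ∧ 2*C2 = 1 - C7) ∨ (1/3 ≤ C2 ∧ C2 ≤ 1 ∧ 2*C7 = 1 - C2))
    (m13 : Mx ((X1+X3)/4) C1 C3) (m57 : Mx ((X5+X7)/4) C5 C7)
    (m17 : Mx ((X1+X7)/4) C1 C7) (m35 : Mx ((X3+X5)/4) C3 C5)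
    (m04 : Mx ((X0+X4)/4) C0 C4)
    (h0 : X0 ≤ 2) (h4 : X4 ≤ 2) (h04 : X0+X4 ≤ 3) (h26 : X2+X6 ≤ 3)
    (h2 : 1/3 ≤ C2 → X2 ≤ 2/3+(1+C2)/2) (h6 : 1/3 ≤ C6 → X6 ≤ 1+C6) :
    X0+X1+X2+X3+X4+X5+X6+X7 ≤ 11 := by
  have g2 : X2 ≤ 2/3+(1+C2)/2 := by
    rcases le_total (1/3) C2 with h | h
    · exact h2 h
    · linarith
  have g6 : X6 ≤ 1+C6 := by
    rcases le_total (1/3) C6 with h | h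
    · exact h6 h
    · linarith
  replace m13 := m13.two (by linarith only [l1, l3])
  replace m57 := m57.two (by linarith only [l5, l7])
  replace m17 := m17.two (by linarith only [l1, l7])
  replace m35 := m35.two (by linarith only [l3, l5])
  replace m04 := m04.two (by linarith only [l0, l4])
  rcases p10 with ⟨p10a1, p10a2, p10a3⟩ | ⟨p10b1, p10b2, p10b3⟩
  · rcases p36 with ⟨p36a1, p36a2, p36a3⟩ | ⟨p36b1, p36b2, p36b3⟩
    · rcases p54 with ⟨p54a1, p54a2, p54a3⟩ | ⟨p54b1, p54b2, p54b3⟩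
      · rcases p72 with ⟨p72a1, p72a2, p72a3⟩ | ⟨p72b1, p72b2, p72b3⟩
        · rcases m13 with ⟨m13a, m13b⟩ | ⟨m13c, m13d⟩
          · rcases m57 with ⟨m57a, m57b⟩ | ⟨m57c, m57d⟩
            · linarith only [l0, l2, l4, g6, p10a3, p36a1, p36a3, p54a3, p72a1, p72a3, m13b, m57b]
            · linarith only [l0, l2, l4, g6, p10a3, p36a1, p36a3, p54a1, p54a3, p72a3, m13b, m57d]
          · rcases m57 with ⟨m57a, m57b⟩ | ⟨m57c, m57d⟩
            · linarith only [l0, l4, l6, g2, p10a1, p10a3, p36a3, p54a3, p72a1, p72a3, m13d, m57b]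
            · linarith only [l0, l2, l4, l6, p10a1, p10a3, p36a3, p54a1, p54a3, p72a3, m13d, m57d]
        · rcases m13 with ⟨m13a, m13b⟩ | ⟨m13c, m13d⟩
          · rcases m57 with ⟨m57a, m57b⟩ | ⟨m57c, m57d⟩
            · linarith only [l0, l4, l5, l7, g2, g6, p10a3, p36a1, p36a3, p54a2, p54a3, p72b3, m13b, m57b]
            · linarith only [l0, l2, l4, l5, l7, g2, g6, p10a3, p36a1, p36a3, p54a3, p72b3, m13b, m57d]
          · rcases m57 with ⟨m57a, m57b⟩ | ⟨m57c, m57d⟩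
            · linarith only [l0, l4, l5, l6, l7, g2, p10a1, p10a3, p36a3, p54a2, p54a3, p72b3, m13d, m57b]
            · linarith only [l0, l2, l4, l5, l6, l7, g2, p10a1, p10a3, p36a3, p54a3, p72b3, m13d, m57c]
      · rcases p72 with ⟨p72a1, p72a2, p72a3⟩ | ⟨p72b1, p72b2, p72b3⟩
        · rcases m13 with ⟨m13a, m13b⟩ | ⟨m13c, m13d⟩
          · rcases m17 with ⟨m17a, m17b⟩ | ⟨m17c, m17d⟩
            · linarith only [l0, l2, l3, l4, l5, l6, l7, h4, p10a3, p36a3, p54b3, p72a3, m13b, m17b]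
            · linarith only [l0, l2, l3, l4, l5, l6, h4, p10a3, p36a3, p54b3, p72a3, m13a, m17d]
          · rcases m57 with ⟨m57a, m57b⟩ | ⟨m57c, m57d⟩
            · linarith only [l0, l4, l5, l6, l7, g2, p10a1, p10a3, p36a3, p54b3, p72a1, p72a3, m13d, m57a]
            · linarith only [l2, l6, h04, p36a3, p72a3, m13d, m57d]
        · rcases m13 with ⟨m13a, m13b⟩ | ⟨m13c, m13d⟩
          · linarith only [l0, l2, l4, l5, l7, h4, g2, g6, p10a3, p36a1, p36a3, p54b3, p72b3, m13b]
          · linarith only [l0, l2, l4, l5, l6, l7, h04, g2, p10a1, p10a3, p36a3, p54b3, p72b3, m13d]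
    · rcases p54 with ⟨p54a1, p54a2, p54a3⟩ | ⟨p54b1, p54b2, p54b3⟩
      · rcases p72 with ⟨p72a1, p72a2, p72a3⟩ | ⟨p72b1, p72b2, p72b3⟩
        · rcases m57 with ⟨m57a, m57b⟩ | ⟨m57c, m57d⟩
          · rcases m13 with ⟨m13a, m13b⟩ | ⟨m13c, m13d⟩
            · linarith only [l0, l4, h26, p10a3, p54a3, m57b, m13b]
            · linarith only [l0, l1, l3, l4, l6, g2, g6, p10a3, p36b3, p54a3, p72a1, p72a3, m57b, m13d]
          · rcases m17 with ⟨m17a, m17b⟩ | ⟨m17c, m17d⟩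
            · linarith only [l0, l2, l3, l4, l5, l6, g6, p10a3, p36b3, p54a3, p72a3, m57c, m17b]
            · linarith only [l0, l1, l2, l3, l4, l5, l6, g6, p10a3, p36b3, p54a3, p72a3, m57d, m17d]
        · rcases m13 with ⟨m13a, m13b⟩ | ⟨m13c, m13d⟩
          · rcases m57 with ⟨m57a, m57b⟩ | ⟨m57c, m57d⟩
            · linarith only [l0, l4, h26, p10a3, p54a3, m13b, m57b]
            · linarith only [l0, l4, l5, l7, h26, p10a3, p54a3, p72b1, p72b3, m13b, m57c]
          · rcases m57 with ⟨m57a, m57b⟩ | ⟨m57c, m57d⟩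
            · linarith only [l0, l1, l3, l4, l5, l6, l7, h26, g2, p10a3, p36b3, p54a2, p54a3, p72b3, m13c, m57b]
            · linarith only [l0, l1, l2, l3, l4, l5, l6, l7, g2, g6, p10a3, p36b3, p54a3, p72b3, m13c, m57c]
      · rcases p72 with ⟨p72a1, p72a2, p72a3⟩ | ⟨p72b1, p72b2, p72b3⟩
        · rcases m17 with ⟨m17a, m17b⟩ | ⟨m17c, m17d⟩
          · linarith only [l0, l3, l4, l5, l6, h4, g2, g6, p10a3, p36b3, p54b3, p72a1, p72a3, m17b]
          · linarith only [l0, l2, l3, l4, l5, l6, h04, g6, p10a1, p10a3, p36b3, p54b3, p72a3, m17d]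
        · rcases m13 with ⟨m13a, m13b⟩ | ⟨m13c, m13d⟩
          · rcases m17 with ⟨m17a, m17b⟩ | ⟨m17c, m17d⟩
            · linarith only [l0, l2, l3, l4, l5, l7, h4, g2, g6, p10a3, p36b3, p54b3, p72b3, m13b, m17b]
            · linarith only [l0, l1, l2, l3, l4, l5, l6, l7, h04, g2, g6, p10a3, p36b3, p54b3, p72b3, m17c]
          · linarith only [l0, l1, l2, l3, l4, l5, l6, l7, h04, g2, g6, p10a3, p36b3, p54b3, p72b3, m13c]
  · rcases p36 with ⟨p36a1, p36a2, p36a3⟩ | ⟨p36b1, p36b2, p36b3⟩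
    · rcases p54 with ⟨p54a1, p54a2, p54a3⟩ | ⟨p54b1, p54b2, p54b3⟩
      · rcases p72 with ⟨p72a1, p72a2, p72a3⟩ | ⟨p72b1, p72b2, p72b3⟩
        · rcases m57 with ⟨m57a, m57b⟩ | ⟨m57c, m57d⟩
          · rcases m35 with ⟨m35a, m35b⟩ | ⟨m35c, m35d⟩
            · linarith only [l0, l1, l2, l4, l6, l7, h0, p10b3, p36a3, p54a3, p72a3, m57a, m35b]
            · linarith only [l0, l1, l2, l3, l4, l6, l7, h0, p10b3, p36a3, p54a3, p72a3, m57b, m35d]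
          · rcases m13 with ⟨m13a, m13b⟩ | ⟨m13c, m13d⟩
            · linarith only [l0, l1, l2, l3, l4, g6, p10b3, p36a1, p36a3, p54a1, p54a3, p72a3, m57d, m13a]
            · linarith only [l2, l6, h04, p36a3, p72a3, m57d, m13d]
        · rcases m35 with ⟨m35a, m35b⟩ | ⟨m35c, m35d⟩
          · linarith only [l0, l1, l2, l4, l6, l7, h04, g2, p10b3, p36a3, p54a1, p54a3, p72b3, m35b]
          · linarith only [l0, l1, l2, l4, l7, h0, g2, g6, p10b3, p36a1, p36a3, p54a3, p72b3, m35d]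
      · rcases p72 with ⟨p72a1, p72a2, p72a3⟩ | ⟨p72b1, p72b2, p72b3⟩
        · rcases m13 with ⟨m13a, m13b⟩ | ⟨m13c, m13d⟩
          · rcases m57 with ⟨m57a, m57b⟩ | ⟨m57c, m57d⟩
            · linarith only [l0, l1, l3, l4, l5, l7, g2, g6, p10b3, p36a1, p36a3, p54b3, p72a1, p72a3, m13a, m57a]
            · linarith only [l1, l2, l3, l6, h04, p10b1, p10b3, p36a3, p72a3, m13a, m57d]
          · rcases m57 with ⟨m57a, m57b⟩ | ⟨m57c, m57d⟩
            · linarith only [l2, l5, l6, l7, h04, p36a3, p54b1, p54b3, p72a3, m13d, m57b]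
            · linarith only [l2, l6, h04, p36a3, p72a3, m13d, m57d]
        · rcases m13 with ⟨m13a, m13b⟩ | ⟨m13c, m13d⟩
          · linarith only [l0, l1, l2, l3, l4, l5, l6, l7, h04, g2, p10b1, p10b3, p36a3, p54b3, p72b3, m13a]
          · linarith only [l2, l5, l6, l7, h04, g2, p36a3, p54b1, p54b3, p72b3, m13d]
    · rcases p54 with ⟨p54a1, p54a2, p54a3⟩ | ⟨p54b1, p54b2, p54b3⟩
      · rcases p72 with ⟨p72a1, p72a2, p72a3⟩ | ⟨p72b1, p72b2, p72b3⟩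
        · rcases m57 with ⟨m57a, m57b⟩ | ⟨m57c, m57d⟩
          · linarith only [l0, l1, l3, l4, l6, h0, g2, g6, p10b3, p36b3, p54a3, p72a1, p72a3, m57b]
          · linarith only [l0, l1, l2, l3, l4, l6, h04, g6, p10b3, p36b3, p54a1, p54a3, p72a3, m57d]
        · rcases m57 with ⟨m57a, m57b⟩ | ⟨m57c, m57d⟩
          · rcases m35 with ⟨m35a, m35b⟩ | ⟨m35c, m35d⟩
            · linarith only [l0, l1, l2, l3, l4, l5, l6, l7, h04, g2, g6, p10b3, p36b3, p54a3, p72b3, m35a]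
            · linarith only [l0, l1, l2, l3, l4, l7, h0, g2, g6, p10b3, p36b3, p54a3, p72b3, m57b, m35d]
          · linarith only [l0, l1, l2, l3, l4, l5, l6, l7, h04, g2, g6, p10b3, p36b3, p54a3, p72b3, m57c]
      · rcases p72 with ⟨p72a1, p72a2, p72a3⟩ | ⟨p72b1, p72b2, p72b3⟩
        · rcases m57 with ⟨m57a, m57b⟩ | ⟨m57c, m57d⟩
          · linarith only [l0, l1, l2, l3, l4, l5, l6, l7, h04, g6, p10b3, p36b3, p54b3, p72a3, m57a, m57b]
          · linarith only [l1, l2, l3, l6, h04, g6, p10b1, p10b3, p36b3, p72a3, m57d]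
        · linarith only [l0, l1, l2, l3, l4, l5, l6, l7, h04, g2, g6, p10b3, p36b3, p54b3, p72b3]

open Finset

lemma sum32 (f : ZMod 32 → ℝ) : ∑ r, f r = (f 0 + f 8 + f 16 + f 24) + (f 1 + f 9 + f 17 + f 25) + (f 2 + f 10 + f 18 + f 26) + (f 3 + f 11 + f 19 + f 27) + (f 4 + f 12 + f 20 + f 28) + (f 5 + f 13 + f 21 + f 29) + (f 6 + f 14 + f 22 + f 30) + (f 7 + f 15 + f 23 + f 31) := by
  have : ∀ g : Fin 32 → ℝ, ∑ r, g r = (g 0 + g 8 + g 16 + g 24) + (g 1 + g 9 + g 17 + g 25) + (g 2 + g 10 + g 18 + g 26) + (g 3 + g 11 + g 19 + g 27) + (g 4 + g 12 + g 20 + g 28) + (g 5 + g 13 + g 21 + g 29) + (g 6 + g 14 + g 22 + g 30) + (g 7 + g 15 + g 23 + g 31) := by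
    intro g
    simp only [Fin.sum_univ_succ, Fin.sum_univ_zero]
    simp only [Fin.succ_zero_eq_one, Fin.reduceSucc]
    ring
  exact this f

/-- abstract spectral lemma -/
lemma spectral {G : Type*} [AddCommGroup G] [Fintype G] [DecidableEq G] (w : G → ℂ)
    (hw : ∑ t, w t = 1) (hb : ∀ ψ : AddChar G ℂ, ψ ≠ 0 → ‖∑ t, w t * ψ t‖ ≤ 1/2)
    (A B : Finset G) (h : ∀ a ∈ A, ∀ b ∈ B, w (a + b) = 0) :
    4 * (A.card : ℝ) * B.card ≤ (Fintype.card G - A.card) * (Fintype.card G - B.card) := by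
  classical
  set N : ℝ := ((Fintype.card G : ℕ) : ℝ) with hN
  let F : Finset G → AddChar G ℂ → ℂ := fun A ψ => ∑ a ∈ A, ψ (-a)
  have pars : ∀ A : Finset G, ∑ ψ : AddChar G ℂ, ‖F A ψ‖^2 = N * A.card := by
    intro A
    have : ((∑ ψ : AddChar G ℂ, ‖F A ψ‖^2 : ℝ) : ℂ) = (N : ℂ) * A.card := by
      push_cast
      have e : ∀ ψ : AddChar G ℂ, (‖F A ψ‖ : ℂ)^2 = ∑ a ∈ A, ∑ b ∈ A, ψ (b - a) := by
        intro ψ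
        rw [← Complex.mul_conj', map_sum, Finset.sum_mul_sum]
        refine Finset.sum_congr rfl fun a _ => Finset.sum_congr rfl fun b _ => ?_
        rw [← AddChar.map_neg_eq_conj, neg_neg, ← AddChar.map_add_eq_mul]
        congr 1; abel
      simp_rw [e]
      rw [Finset.sum_comm]
      have : ∀ a ∈ A, ∑ ψ : AddChar G ℂ, ∑ b ∈ A, ψ (b - a) = N := by
        intro a ha
        rw [Finset.sum_comm]
        simp_rw [AddChar.sum_apply_eq_ite, sub_eq_zero]
        rw [Finset.sum_ite_eq' A a]
        simp [ha, hN]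
      rw [Finset.sum_congr rfl this]
      simp [mul_comm]
    exact_mod_cast this
  have inv : ∑ ψ : AddChar G ℂ, (∑ t, w t * ψ t) * (F A ψ * F B ψ) = 0 := by
    have e : ∀ ψ : AddChar G ℂ, (∑ t, w t * ψ t) * (F A ψ * F B ψ)
        = ∑ a ∈ A, ∑ b ∈ B, ∑ t, w t * ψ (t - (a + b)) := by
      intro ψ
      simp only [F]
      rw [Finset.sum_mul_sum, Finset.mul_sum]
      refine Finset.sum_congr rfl fun a _ => ?_
      rw [Finset.mul_sum]
      refine Finset.sum_congr rfl fun b _ => ?_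
      rw [Finset.sum_mul]
      refine Finset.sum_congr rfl fun t _ => ?_
      rw [mul_assoc, ← AddChar.map_add_eq_mul, ← AddChar.map_add_eq_mul]
      congr 2; abel
    simp_rw [e]
    rw [Finset.sum_comm]
    refine Finset.sum_eq_zero fun a ha => ?_
    rw [Finset.sum_comm]
    refine Finset.sum_eq_zero fun b hb => ?_
    rw [Finset.sum_comm]
    simp_rw [← Finset.mul_sum, AddChar.sum_apply_eq_ite, sub_eq_zero]
    simp [h a ha b hb]
  have F0 : ∀ A : Finset G, F A 0 = A.card := by intro A; simp [F]
  rw [← Finset.add_sum_erase _ _ (Finset.mem_univ (0 : AddChar G ℂ))] at inv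
  have hle : (A.card : ℝ) * B.card ≤ 1/2 * ∑ ψ ∈ Finset.univ.erase (0 : AddChar G ℂ), ‖F A ψ‖ * ‖F B ψ‖ := by
    have h1 : ((A.card : ℂ) * B.card) = - ∑ ψ ∈ Finset.univ.erase (0 : AddChar G ℂ), (∑ t, w t * ψ t) * (F A ψ * F B ψ) := by
      rw [F0, F0] at inv
      simp only [AddChar.zero_apply, mul_one, hw, one_mul] at inv
      linear_combination inv
    have h2 : (A.card : ℝ) * B.card = ‖((A.card : ℂ) * B.card)‖ := by simp
    rw [h2, h1, norm_neg, Finset.mul_sum]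
    refine (norm_sum_le _ _).trans (Finset.sum_le_sum fun ψ hψ => ?_)
    rw [norm_mul, norm_mul]
    exact mul_le_mul_of_nonneg_right (hb ψ (Finset.ne_of_mem_erase hψ)) (by positivity)
  have pars' : ∀ A : Finset G, ∑ ψ ∈ Finset.univ.erase (0 : AddChar G ℂ), ‖F A ψ‖^2 = A.card * (N - A.card) := by
    intro A
    have := pars A
    rw [← Finset.add_sum_erase _ _ (Finset.mem_univ (0 : AddChar G ℂ)), F0] at this
    simp only [Complex.norm_natCast] at this
    linear_combination this
  have cs := Finset.sum_mul_sq_le_sq_mul_sq (Finset.univ.erase (0 : AddChar G ℂ)) (fun ψ => ‖F A ψ‖) (fun ψ => ‖F B ψ‖)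
  rw [pars', pars'] at cs
  have hA : (A.card : ℝ) ≤ N := by rw [hN]; exact_mod_cast Finset.card_le_univ A
  have hB : (B.card : ℝ) ≤ N := by rw [hN]; exact_mod_cast Finset.card_le_univ B
  rcases Nat.eq_zero_or_pos A.card with h0 | h0
  · rw [h0]; simp only [Nat.cast_zero]; nlinarith
  rcases Nat.eq_zero_or_pos B.card with h0' | h0'
  · rw [h0']; simp only [Nat.cast_zero]; nlinarith
  have a0 : (0:ℝ) < A.card := by exact_mod_cast h0
  have b0 : (0:ℝ) < B.card := by exact_mod_cast h0'
  have h3 : ((A.card : ℝ) * B.card)^2 ≤ 1/4 * ((A.card * (N - A.card)) * (B.card * (N - B.card))) := by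
    have : ((A.card : ℝ) * B.card)^2 ≤ (1/2 * ∑ ψ ∈ Finset.univ.erase (0 : AddChar G ℂ), ‖F A ψ‖ * ‖F B ψ‖)^2 :=
      pow_le_pow_left₀ (by positivity) hle 2
    rw [mul_pow] at this
    linarith
  have ab : (0:ℝ) < A.card * B.card := by positivity
  refine le_of_mul_le_mul_left ?_ ab
  linarith

def GoodW (R : Type*) [CommRing R] [Fintype R] : Prop :=
  ∃ w : R → ℂ, ∑ t, w t = 1 ∧ (∀ ψ : AddChar R ℂ, ψ ≠ 0 → ‖∑ t, w t * ψ t‖ ≤ 1/2) ∧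
    ∀ t, w t ≠ 0 → ∃ x, t = x ^ 2

lemma good_prod {R T : Type*} [CommRing R] [Fintype R] [CommRing T] [Fintype T]
    (hR : GoodW R) (hT : GoodW T) : GoodW (R × T) := by
  obtain ⟨w, w1, w2, w3⟩ := hR
  obtain ⟨v, v1, v2, v3⟩ := hT
  refine ⟨fun p => w p.1 * v p.2, ?_, ?_, ?_⟩
  · rw [Fintype.sum_prod_type, ← Finset.sum_mul_sum, w1, v1, one_mul]
  · intro ψ hψ
    let ψ1 : AddChar R ℂ := ψ.compAddMonoidHom (AddMonoidHom.inl R T)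
    let ψ2 : AddChar T ℂ := ψ.compAddMonoidHom (AddMonoidHom.inr R T)
    have e : ∀ p : R × T, ψ p = ψ1 p.1 * ψ2 p.2 := by
      rintro ⟨x, y⟩
      simp only [ψ1, ψ2, AddChar.compAddMonoidHom_apply, AddMonoidHom.inl_apply,
        AddMonoidHom.inr_apply]
      rw [← AddChar.map_add_eq_mul]; simp
    have e2 : ∑ p : R × T, w p.1 * v p.2 * ψ p = (∑ x, w x * ψ1 x) * ∑ y, v y * ψ2 y := by
      rw [Fintype.sum_prod_type, Finset.sum_mul_sum]
      refine Finset.sum_congr rfl fun x _ => Finset.sum_congr rfl fun y _ => ?_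
      rw [e]; ring
    rw [e2, norm_mul]
    by_cases h1 : ψ1 = 0
    · have h2 : ψ2 ≠ 0 := by
        intro h2; apply hψ
        ext p; rw [e, h1, h2]; simp
      rw [h1]; simp only [AddChar.zero_apply, mul_one, w1, norm_one, one_mul]
      exact v2 _ h2
    · by_cases h2 : ψ2 = 0
      · rw [h2]; simp only [AddChar.zero_apply, mul_one, v1, norm_one]
        exact w2 _ h1
      · have := w2 _ h1
        have := v2 _ h2
        nlinarith [norm_nonneg (∑ x, w x * ψ1 x), norm_nonneg (∑ y, v y * ψ2 y)]
  · rintro ⟨x, y⟩ h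
    obtain ⟨a, ha⟩ := w3 x (left_ne_zero_of_mul h)
    obtain ⟨b, hb⟩ := v3 y (right_ne_zero_of_mul h)
    exact ⟨(a, b), by simp [ha, hb]⟩

lemma good_n (n : ℕ) [NeZero n] (h2 : Nat.Coprime n 2) (h3 : Nat.Coprime n 3) : GoodW (ZMod n) := by
  classical
  have hn : (0:ℝ) < n := by exact_mod_cast Nat.pos_of_ne_zero (NeZero.ne n)
  have hnc : (n : ℂ) ≠ 0 := by exact_mod_cast (NeZero.ne n)
  let w : ZMod n → ℂ := fun t => ((Finset.univ.filter fun x : ZMod n => x ^ 2 = t).card : ℂ) / n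
  have key : ∀ f : ZMod n → ℂ, ∑ t, w t * f t = (∑ x : ZMod n, f (x ^ 2)) / n := by
    intro f
    rw [← Finset.sum_fiberwise (Finset.univ : Finset (ZMod n)) (fun x => x ^ 2) (fun x => f (x ^ 2)),
      Finset.sum_div]
    refine Finset.sum_congr rfl fun t _ => ?_
    rw [Finset.sum_congr rfl (g := fun _ => f t) (by intro x hx; rw [(Finset.mem_filter.1 hx).2])]
    simp [w]; ring
  refine ⟨w, ?_, ?_, ?_⟩
  · have := key (fun _ => 1)
    simp only [mul_one] at this
    rw [this]; simp [hnc]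
  · intro ψ hψ
    rw [key, norm_div, Complex.norm_natCast, div_le_iff₀ hn]
    let H : AddSubgroup (ZMod n) :=
      { carrier := {h | ∀ x, ψ (2 * x * h) = 1}
        zero_mem' := by intro x; simp
        add_mem' := by
          intro a b ha hb x
          have e : 2 * x * (a + b) = 2 * x * a + 2 * x * b := by ring
          rw [e, AddChar.map_add_eq_mul, ha x, hb x, one_mul]
        neg_mem' := by
          intro a ha x
          have e : 2 * x * (-a) = 2 * (-x) * a := by ring
          rw [e]; exact ha _ }
    have hu2 : IsUnit (2 : ZMod n) := by
      have := (ZMod.unitOfCoprime 2 h2.symm).isUnit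
      simpa using this
    obtain ⟨u, hu⟩ := hu2.exists_right_inv
    have hH : H ≠ ⊤ := by
      intro hH
      apply hψ
      ext x
      have : (1 : ZMod n) ∈ H := by rw [hH]; trivial
      have := this (u * x)
      rw [show 2 * (u * x) * 1 = (2 * u) * x by ring, hu, one_mul] at this
      simpa using this
    have hidx : 5 ≤ H.index := by
      have hd : H.index ∣ n := by
        have := H.card_mul_index
        rw [Nat.card_zmod] at this
        exact ⟨_, by rw [mul_comm]; exact this.symm⟩
      have h1 : H.index ≠ 1 := by rwa [Ne, AddSubgroup.index_eq_one]
      have h0 : H.index ≠ 0 := by rintro h0; rw [h0] at hd; exact (NeZero.ne n) (zero_dvd_iff.1 hd)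
      have c2 := Nat.Coprime.coprime_dvd_left hd h2
      have c3 := Nat.Coprime.coprime_dvd_left hd h3
      by_contra hlt
      push Not at hlt
      interval_cases H.index <;> simp_all +decide
    have hcard : 5 * Nat.card H ≤ n := by
      have := H.card_mul_index
      rw [Nat.card_zmod] at this
      nlinarith
    have sq : (‖∑ x : ZMod n, ψ (x ^ 2)‖ : ℂ) ^ 2 = ∑ h : ZMod n, ψ (h ^ 2) * ∑ x : ZMod n, ψ (2 * x * h) := by
      rw [← Complex.mul_conj', map_sum, Finset.sum_mul_sum]
      have : ∀ x : ZMod n, ∑ y : ZMod n, ψ (y ^ 2) * (starRingEnd ℂ) (ψ (x ^ 2)) = ∑ h : ZMod n, ψ (h ^ 2) * ψ (2 * x * h) := by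
        intro x
        rw [← Equiv.sum_comp (Equiv.addLeft x)]
        refine Finset.sum_congr rfl fun h _ => ?_
        rw [← AddChar.map_neg_eq_conj, ← AddChar.map_add_eq_mul, ← AddChar.map_add_eq_mul]
        congr 1
        simp only [Equiv.coe_addLeft]; ring
      rw [Finset.sum_comm, Finset.sum_congr rfl fun x _ => this x, Finset.sum_comm]
      simp_rw [Finset.mul_sum]
    have inner : ∀ h : ZMod n, ∑ x : ZMod n, ψ (2 * x * h) = if h ∈ H then (n : ℂ) else 0 := by
      intro h
      let φ : AddChar (ZMod n) ℂ := ψ.compAddMonoidHom (AddMonoidHom.mulLeft (2 * h))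
      have e : ∀ x, ψ (2 * x * h) = φ x := by
        intro x
        simp only [φ, AddChar.compAddMonoidHom_apply, AddMonoidHom.coe_mulLeft]
        congr 1; ring
      simp_rw [e]
      rw [AddChar.sum_eq_ite]
      have : φ = 0 ↔ h ∈ H := by
        constructor
        · intro h0 x; rw [e, h0]; simp
        · intro h0; ext x; rw [← e, h0 x]; simp
      simp [this, ZMod.card]
    have sq2 : ‖∑ x : ZMod n, ψ (x ^ 2)‖ ^ 2 ≤ Nat.card H * n := by
      have : ‖∑ x : ZMod n, ψ (x ^ 2)‖ ^ 2 = ‖∑ h : ZMod n, ψ (h ^ 2) * ∑ x : ZMod n, ψ (2 * x * h)‖ := by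
        rw [← sq]; simp
      rw [this]
      refine (norm_sum_le _ _).trans ?_
      have : ∀ h : ZMod n, ‖ψ (h ^ 2) * ∑ x : ZMod n, ψ (2 * x * h)‖ = if h ∈ H then (n : ℝ) else 0 := by
        intro h
        rw [norm_mul, AddChar.norm_apply, one_mul, inner]
        split_ifs <;> simp
      simp_rw [this]
      rw [← Finset.sum_filter, Finset.sum_const, nsmul_eq_mul]
      rw [Nat.card_eq_fintype_card, Fintype.card_subtype]
    have hc : (5:ℝ) * Nat.card H ≤ n := by exact_mod_cast hcard
    refine abs_le_of_sq_le_sq' ?_ (by positivity) |>.2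
    nlinarith
  · intro t ht
    by_contra hne
    push Not at hne
    apply ht
    have : (Finset.univ.filter fun x : ZMod n => x ^ 2 = t) = ∅ := by
      ext x; simpa using fun h => hne x h.symm
    simp [w, this]

lemma sq_three (j : ℕ) (s : ZMod (3 ^ (j+1))) : ∃ x, 1 + 3 * s = x ^ 2 := by
  have hd : ((3:ℕ) : ZMod (3^(j+1))) ∣ (1 + 3 * s) - 1 := ⟨s, by push_cast; ring⟩
  have h := dvd_sub_pow_of_dvd_sub hd j
  have h0 : (((3:ℕ) : ZMod (3^(j+1)))) ^ (j+1) = 0 := by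
    rw [← Nat.cast_pow, ZMod.natCast_self]
  rw [h0, zero_dvd_iff, one_pow, sub_eq_zero] at h
  obtain ⟨m, hm⟩ : Odd (3 ^ j) := Odd.pow (by decide)
  refine ⟨(1 + 3 * s) ^ (m + 1), ?_⟩
  rw [← pow_mul, show (m+1)*2 = 3 ^ j + 1 by omega, pow_succ (1 + 3 * s) (3 ^ j), h, one_mul]

lemma good_triv (R : Type*) [CommRing R] [Fintype R] [Subsingleton R] : GoodW R := by
  refine ⟨fun _ => 1, ?_, ?_, fun t _ => ⟨t, Subsingleton.elim _ _⟩⟩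
  · rw [Fintype.sum_subsingleton _ 0]
  · intro ψ hψ
    exfalso; apply hψ; ext x
    rw [Subsingleton.elim x 0]; simp

lemma norm_one_add_cube (z : ℂ) (h : z ^ 3 = 1) (h1 : z ≠ 1) : ‖1 + z‖ = 1 := by
  have h2 : 1 + z = - z ^ 2 := by
    have : (z - 1) * (1 + z + z ^ 2) = 0 := by linear_combination h
    rcases mul_eq_zero.1 this with h3 | h3
    · exact absurd (sub_eq_zero.1 h3) h1
    · linear_combination h3
  have h4 : ‖z‖ = 1 := by
    have : ‖z‖ ^ 3 = 1 := by rw [← norm_pow, h, norm_one]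
    exact (pow_eq_one_iff_of_nonneg (norm_nonneg _) (by norm_num)).1 this
  rw [h2, norm_neg, norm_pow, h4, one_pow]

lemma good_three (j : ℕ) : GoodW (ZMod (3 ^ j)) := by
  classical
  rcases j with _ | j
  · have : Subsingleton (ZMod (3 ^ 0)) := by rw [pow_zero]; infer_instance
    exact good_triv _
  let R := ZMod (3 ^ (j+1))
  let N : ℂ := (Fintype.card R : ℕ)
  have hN : N ≠ 0 := by simp [N, R]
  let w : R → ℂ := fun t => (1/2) * (if t = 0 then 1 else 0) +
    (1/2) * (((Finset.univ.filter fun s : R => 1 + 3 * s = t).card : ℂ) / N)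
  have key : ∀ f : R → ℂ, ∑ t, w t * f t = 1/2 * f 0 + 1/2 * ((∑ s : R, f (1 + 3 * s)) / N) := by
    intro f
    rw [← Finset.sum_fiberwise (Finset.univ : Finset R) (fun x => 1 + 3 * x) (fun x => f (1 + 3 * x)),
      Finset.sum_div, Finset.mul_sum]
    have : (1/2 : ℂ) * f 0 = ∑ t : R, (1/2) * (if t = 0 then 1 else 0) * f t := by
      rw [Finset.sum_eq_single 0]
      · simp
      · intro b _ hb; simp [hb]
      · simp
    rw [this, ← Finset.sum_add_distrib]
    refine Finset.sum_congr rfl fun t _ => ?_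
    rw [Finset.sum_congr rfl (g := fun _ => f t) (by intro x hx; rw [(Finset.mem_filter.1 hx).2])]
    simp only [w, Finset.sum_const, nsmul_eq_mul]; ring
  refine ⟨w, ?_, ?_, ?_⟩
  · have := key (fun _ => 1)
    simp only [mul_one] at this
    rw [this]
    rw [Finset.sum_const, nsmul_eq_mul, mul_one, Finset.card_univ]
    change 1/2 + 1/2 * (N / N) = 1
    rw [div_self hN]; norm_num
  · intro ψ hψ
    rw [key]
    let φ : AddChar R ℂ := ψ.compAddMonoidHom (AddMonoidHom.mulLeft (3 : R))
    have e : ∀ s, ψ (1 + 3 * s) = ψ 1 * φ s := by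
      intro s; rw [AddChar.map_add_eq_mul]; rfl
    simp_rw [e]
    rw [← Finset.mul_sum, AddChar.sum_eq_ite]
    by_cases h : φ = 0
    · rw [if_pos h]
      change ‖1/2 * ψ 0 + 1/2 * (ψ 1 * N / N)‖ ≤ 1/2
      rw [mul_div_assoc, div_self hN, mul_one, AddChar.map_zero_eq_one, ← mul_add, norm_mul]
      have h1 : ψ 1 ≠ 1 := by
        intro h1; apply hψ
        ext x
        have : x = (x.val : ℕ) • (1 : R) := by
          rw [nsmul_one]; exact (ZMod.natCast_zmod_val x).symm
        rw [this, AddChar.map_nsmul_eq_pow, h1, one_pow]; simp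
      have h3 : ψ 1 ^ 3 = 1 := by
        rw [← AddChar.map_nsmul_eq_pow]
        have : φ 1 = 1 := by rw [h]; simp
        rw [← this]
        change _ = ψ (3 * 1)
        congr 1; simp
      rw [norm_one_add_cube _ h3 h1]; norm_num
    · rw [if_neg h]; simp
  · intro t ht
    by_cases h0 : t = 0
    · exact ⟨0, by simp [h0]⟩
    by_contra hne
    push Not at hne
    apply ht
    have : (Finset.univ.filter fun s : R => 1 + 3 * s = t) = ∅ := by
      ext s
      simp only [Finset.mem_filter, Finset.mem_univ, true_and, Finset.notMem_empty, iff_false]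
      intro hs
      obtain ⟨x, hx⟩ := sq_three j s
      exact hne x (hs.symm.trans hx)
    simp [w, this, h0]

lemma sq_two (k : ℕ) (s : ℤ) : ∃ x : ℤ, (2:ℤ) ^ k ∣ (1 + 8 * s) - x ^ 2 := by
  rcases Nat.lt_or_ge k 3 with hk | hk
  · refine ⟨1, ?_⟩
    have : (2:ℤ)^k ∣ 2^3 := pow_dvd_pow _ hk.le
    exact this.trans ⟨s, by ring⟩
  suffices ∃ x : ℤ, Odd x ∧ (2:ℤ) ^ k ∣ (1 + 8 * s) - x ^ 2 by
    obtain ⟨x, _, h⟩ := this; exact ⟨x, h⟩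
  induction k, hk using Nat.le_induction with
  | base => exact ⟨1, odd_one, s, by ring⟩
  | succ k hk ih =>
    obtain ⟨x, ⟨y, hy⟩, c, hc⟩ := ih
    obtain ⟨m, rfl⟩ : ∃ m, k = m + 3 := ⟨k - 3, by omega⟩
    rcases Int.even_or_odd c with ⟨d, hd⟩ | ⟨d, hd⟩
    · exact ⟨x, ⟨y, hy⟩, d, by rw [hc, hd]; ring⟩
    · refine ⟨x + 2 ^ (m+2), ⟨y + 2 ^ (m+1), by rw [hy]; ring⟩, d - y - 2 ^ m, ?_⟩
      have : (1 + 8 * s) - (x + 2 ^ (m+2)) ^ 2 = 2 ^ (m+3) * c - 2 ^ (m+3) * x - 2 ^ (2 * m + 4) := by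
        rw [← hc]; ring
      rw [this, hd, hy]; ring

lemma fiber_card {G H : Type*} [AddCommGroup G] [AddCommGroup H] [Fintype G] [Fintype H]
    [DecidableEq H] (f : G →+ H) (hf : Function.Surjective f) (u : H) :
    (Finset.univ.filter fun x => f x = u).card * Fintype.card H = Fintype.card G := by
  have h := Finset.card_eq_sum_card_fiberwise (f := f) (s := (Finset.univ : Finset G))
    (t := Finset.univ) (fun _ _ => by simp)
  rw [Finset.sum_congr rfl (g := fun _ => (Finset.univ.filter fun x => f x = u).card)
    (fun v _ => AddMonoidHom.card_fiber_eq_of_mem_range f (hf v) (hf u))] at h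
  rw [Finset.sum_const, smul_eq_mul, Finset.card_univ, Finset.card_univ] at h
  rw [h, mul_comm]

lemma St_of_spectral {N a b : ℝ} (hN : 0 < N) (ha : 0 ≤ a) (hb : 0 ≤ b)
    (h : 4 * a * b ≤ (N - a) * (N - b)) : St (a / N) (b / N) := by
  have hx : 0 ≤ a / N := by positivity
  have hy : 0 ≤ b / N := by positivity
  have e : 4 * (a / N) * (b / N) ≤ (1 - a / N) * (1 - b / N) := by
    have e1 : 4 * (a / N) * (b / N) = (4 * a * b) / (N * N) := by field_simp
    have e2 : (1 - a / N) * (1 - b / N) = ((N - a) * (N - b)) / (N * N) := by field_simp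
    rw [e1, e2]
    gcongr
  generalize a / N = x at *
  generalize b / N = y at *
  have gen : ∀ x y : ℝ, 0 ≤ x → 0 ≤ y → x ≤ y → 4 * x * y ≤ (1 - x) * (1 - y) →
      x ≤ 1/3 ∧ 2*x+y ≤ 1 := by
    intro x y hx hy hxy h
    have h1 : x ≤ 1/3 := by
      by_contra hc
      push Not at hc
      nlinarith
    refine ⟨h1, ?_⟩
    by_contra hc
    push Not at hc
    nlinarith [mul_nonneg hx (sub_nonneg.2 h1), mul_pos (sub_pos.2 hc) (by linarith : 0 < 1 + 3 * x)]
  rcases le_total x y with hxy | hxy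
  · exact Or.inl (gen x y hx hy hxy e)
  · have := gen y x hy hx hxy (by linarith)
    exact Or.inr ⟨this.1, by linarith [this.2]⟩

section dens
variable {R Q H : Type} [CommRing R] [Fintype R] [DecidableEq R] [CommRing Q] [Fintype Q]
  [DecidableEq Q] [CommRing H] [Fintype H] [DecidableEq H]

def fib (f : R →+* H) (S : Finset (R × Q)) (u : H) : Finset (R × Q) := S.filter fun s => f s.1 = u
def prj (f : R →+* H) (S : Finset (R × Q)) (u : H) : Finset Q := (fib f S u).image Prod.snd
noncomputable def dn (f : R →+* H) (S : Finset (R × Q)) (u : H) : ℝ :=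
  (fib f S u).card * Fintype.card H / (Fintype.card R * Fintype.card Q)
noncomputable def cp (f : R →+* H) (S : Finset (R × Q)) (u : H) : ℝ :=
  (prj f S u).card / Fintype.card Q

lemma card_pos' (T : Type) [CommRing T] [Fintype T] : (0:ℝ) < Fintype.card T := by
  exact_mod_cast Fintype.card_pos

lemma cp_le_one (f : R →+* H) (S : Finset (R × Q)) (u : H) : cp f S u ≤ 1 := by
  unfold cp
  rw [div_le_one (card_pos' Q)]
  exact_mod_cast Finset.card_le_univ _

lemma dn_le_cp (f : R →+* H) (hf : Function.Surjective f) (S : Finset (R × Q)) (u : H) :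
    dn f S u ≤ cp f S u := by
  unfold dn cp
  have hR := card_pos' R
  have hQ := card_pos' Q
  have hH := card_pos' H
  rw [div_le_div_iff₀ (by positivity) hQ]
  have h1 : fib f S u ⊆ (Finset.univ.filter fun x => f x = u) ×ˢ prj f S u := by
    intro s hs
    rw [Finset.mem_product]
    exact ⟨by simpa using (Finset.mem_filter.1 hs).2, Finset.mem_image_of_mem _ hs⟩
  have h2 := Finset.card_le_card h1
  rw [Finset.card_product] at h2
  have h3 := fiber_card f.toAddMonoidHom hf u
  have h3' : ((Finset.univ.filter fun x => f x = u).card : ℝ) * Fintype.card H = Fintype.card R := by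
    exact_mod_cast h3
  have h2' : ((fib f S u).card : ℝ) ≤ (Finset.univ.filter fun x => f x = u).card * (prj f S u).card := by
    exact_mod_cast h2
  calc ((fib f S u).card : ℝ) * Fintype.card H * Fintype.card Q
      ≤ ((Finset.univ.filter fun x => f x = u).card * (prj f S u).card) * Fintype.card H * Fintype.card Q := by gcongr
    _ = (prj f S u).card * (((Finset.univ.filter fun x => f x = u).card * Fintype.card H) * Fintype.card Q) := by ring
    _ = _ := by rw [h3']

lemma cp_St (hQ : GoodW Q) (f : R →+* H) (S : Finset (R × Q))
    (hS : ∀ s ∈ S, ∀ s' ∈ S, ∀ x, s + s' ≠ x ^ 2) (u u' : H)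
    (hu : ∀ t : R, f t = u + u' → ∃ x, t = x ^ 2) : St (cp f S u) (cp f S u') := by
  obtain ⟨w, w1, w2, w3⟩ := hQ
  refine St_of_spectral (card_pos' Q) (by positivity) (by positivity) (spectral w w1 w2 _ _ ?_)
  intro a ha b hb
  obtain ⟨s, hs, rfl⟩ := Finset.mem_image.1 ha
  obtain ⟨s', hs', rfl⟩ := Finset.mem_image.1 hb
  obtain ⟨hs1, hs2⟩ := Finset.mem_filter.1 hs
  obtain ⟨hs1', hs2'⟩ := Finset.mem_filter.1 hs'
  by_contra hne
  obtain ⟨y, hy⟩ := w3 _ hne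
  obtain ⟨x, hx⟩ := hu (s.1 + s'.1) (by rw [map_add, hs2, hs2'])
  exact hS s hs1 s' hs1' (x, y) (Prod.ext hx hy)

lemma dn_zero (f : R →+* H) (hf : Function.Surjective f) (S : Finset (R × Q))
    (hS : ∀ s ∈ S, ∀ s' ∈ S, ∀ x, s + s' ≠ x ^ 2) (u u' : H) (hu : u + u' = 0) :
    dn f S u + dn f S u' ≤ 1 := by
  have hR := card_pos' R
  have hQ := card_pos' Q
  have hH := card_pos' H
  have hd : Disjoint (fib f S u) ((fib f S u').image Neg.neg) := by
    rw [Finset.disjoint_left]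
    intro s hs hs'
    obtain ⟨t, ht, rfl⟩ := Finset.mem_image.1 hs'
    refine hS _ (Finset.mem_filter.1 hs).1 _ (Finset.mem_filter.1 ht).1 0 ?_
    simp
  have hsub : (fib f S u) ∪ ((fib f S u').image Neg.neg) ⊆
      (Finset.univ.filter fun x => f x = u) ×ˢ (Finset.univ : Finset Q) := by
    intro s hs
    rw [Finset.mem_product]
    refine ⟨?_, Finset.mem_univ _⟩
    rw [Finset.mem_filter]
    refine ⟨Finset.mem_univ _, ?_⟩
    rcases Finset.mem_union.1 hs with h | h
    · exact (Finset.mem_filter.1 h).2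
    · obtain ⟨t, ht, rfl⟩ := Finset.mem_image.1 h
      have := (Finset.mem_filter.1 ht).2
      simp only [Prod.fst_neg, map_neg, this]
      exact neg_eq_of_add_eq_zero_left hu
  have h2 := Finset.card_le_card hsub
  rw [Finset.card_union_of_disjoint hd, Finset.card_image_of_injective _ neg_injective,
    Finset.card_product, Finset.card_univ] at h2
  have h3 := fiber_card f.toAddMonoidHom hf u
  have h3' : ((Finset.univ.filter fun x => f x = u).card : ℝ) * Fintype.card H = Fintype.card R := by
    exact_mod_cast h3
  have h2' : ((fib f S u).card : ℝ) + (fib f S u').card ≤ (Finset.univ.filter fun x => f x = u).card * Fintype.card Q := by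
    exact_mod_cast h2
  unfold dn
  rw [← add_div, div_le_one (by positivity), ← h3', ← add_mul]
  calc _ ≤ ((Finset.univ.filter fun x => f x = u).card * (Fintype.card Q : ℝ)) * Fintype.card H := by gcongr
    _ = _ := by ring

lemma dn_sum (f : R →+* H) (S : Finset (R × Q)) :
    ∑ u, dn f S u = S.card * Fintype.card H / (Fintype.card R * Fintype.card Q) := by
  have h := Finset.card_eq_sum_card_fiberwise (f := fun s : R × Q => f s.1) (s := S)
    (t := Finset.univ) (fun _ _ => by simp)
  unfold dn
  rw [← Finset.sum_div, ← Finset.sum_mul, h]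
  push_cast
  rfl

lemma dn_comp {K : Type} [CommRing K] [Fintype K] [DecidableEq K] (f : R →+* H) (g : H →+* K)
    (S : Finset (R × Q)) (r : K) :
    dn (g.comp f) S r * Fintype.card H =
      (∑ u ∈ Finset.univ.filter (fun u => g u = r), dn f S u) * Fintype.card K := by
  have h := Finset.card_eq_sum_card_fiberwise (f := fun s : R × Q => f s.1) (s := fib (g.comp f) S r)
    (t := Finset.univ.filter (fun u => g u = r)) (fun s hs => by
      simpa using (Finset.mem_filter.1 hs).2)
  have h' : (fib (g.comp f) S r).card = ∑ u ∈ Finset.univ.filter (fun u => g u = r), (fib f S u).card := by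
    rw [h]
    refine Finset.sum_congr rfl fun u hu => ?_
    congr 1
    ext s
    simp only [fib, Finset.mem_filter]
    constructor
    · rintro ⟨⟨h1, h2⟩, h3⟩; exact ⟨h1, h3⟩
    · rintro ⟨h1, h3⟩
      refine ⟨⟨h1, ?_⟩, h3⟩
      rw [RingHom.comp_apply, h3]; exact (Finset.mem_filter.1 hu).2
  unfold dn
  rw [← Finset.sum_div, ← Finset.sum_mul, h']
  push_cast
  ring

lemma cp_comp_le {K : Type} [CommRing K] [Fintype K] [DecidableEq K] (f : R →+* H) (g : H →+* K)
    (S : Finset (R × Q)) (u : H) : cp f S u ≤ cp (g.comp f) S (g u) := by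
  unfold cp
  have : prj f S u ⊆ prj (g.comp f) S (g u) := by
    refine Finset.image_subset_image ?_
    intro s hs
    obtain ⟨h1, h2⟩ := Finset.mem_filter.1 hs
    exact Finset.mem_filter.2 ⟨h1, by rw [RingHom.comp_apply, h2]⟩
  gcongr

lemma dn_M {K : Type} [CommRing K] [Fintype K] [DecidableEq K] (hQ : GoodW Q)
    (f : R →+* H) (hf : Function.Surjective f) (g : H →+* K) (hg : Function.Surjective g)
    (S : Finset (R × Q)) (hS : ∀ s ∈ S, ∀ s' ∈ S, ∀ x, s + s' ≠ x ^ 2) (v : H)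
    (hv : ∀ t : R, f t = v → ∃ x, t = x ^ 2) (r r' : K) (hr : r + r' = g v) :
    Mx (dn (g.comp f) S r + dn (g.comp f) S r') (cp (g.comp f) S r) (cp (g.comp f) S r') := by
  refine Mx_of _ _ _ fun C hC h1 h2 => ?_
  have hH := card_pos' H
  have hK := card_pos' K
  have e1 := dn_comp f g S r
  have e2 := dn_comp f g S r'
  have e3 : ∑ u ∈ Finset.univ.filter (fun u => g u = r'), dn f S u =
      ∑ u ∈ Finset.univ.filter (fun u => g u = r), dn f S (v - u) := by
    refine Finset.sum_bij' (fun u _ => v - u) (fun u _ => v - u) ?_ ?_ ?_ ?_ ?_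
    · intro u hu
      have := (Finset.mem_filter.1 hu).2
      simp [this, ← hr]
    · intro u hu
      have := (Finset.mem_filter.1 hu).2
      simp [this, ← hr]
    · intro u _; simp
    · intro u _; simp
    · intro u _; simp
  have e4 : ∑ u ∈ Finset.univ.filter (fun u => g u = r), (dn f S u + dn f S (v - u)) ≤
      ∑ u ∈ Finset.univ.filter (fun u => g u = r), (1 + C) / 2 := by
    refine Finset.sum_le_sum fun u hu => ?_
    have hu' := (Finset.mem_filter.1 hu).2
    have a1 := dn_le_cp f hf S u
    have a2 := dn_le_cp f hf S (v - u)
    have b1 := cp_comp_le f g S u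
    have b2 := cp_comp_le f g S (v - u)
    rw [hu'] at b1
    have : g (v - u) = r' := by rw [map_sub, hu', ← hr]; ring
    rw [this] at b2
    have st := cp_St hQ f S hS u (v - u) (fun t ht => hv t (by rw [ht]; ring))
    have := st.sum hC (b1.trans h1) (b2.trans h2)
    linarith
  rw [Finset.sum_add_distrib, ← e3, Finset.sum_const, nsmul_eq_mul] at e4
  have h3 := fiber_card g.toAddMonoidHom hg r
  have h3' : ((Finset.univ.filter fun x => g x = r).card : ℝ) * Fintype.card K = Fintype.card H := by
    exact_mod_cast h3
  have : (dn (g.comp f) S r + dn (g.comp f) S r') * Fintype.card H ≤ (1 + C) / 2 * Fintype.card H := by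
    rw [add_mul, e1, e2, ← add_mul]
    calc _ ≤ _ := mul_le_mul_of_nonneg_right e4 hK.le
      _ = (1 + C) / 2 * (((Finset.univ.filter fun x => g x = r).card : ℝ) * Fintype.card K) := by ring
      _ = _ := by rw [h3']
  exact le_of_mul_le_mul_right this hH

end dens

lemma sq_pow2 (k d i z0 : ℕ) (hd : d ∣ 2 ^ k) (hi : d = 8 * z0) (hz : z0 = i ^ 2)
    (t : ZMod (2 ^ k)) (ht : ZMod.castHom hd (ZMod d) t = (z0 : ℕ)) : ∃ x, t = x ^ 2 := by
  obtain ⟨z, rfl⟩ := ZMod.intCast_surjective t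
  rw [map_intCast, ← Int.cast_natCast, ZMod.intCast_eq_intCast_iff_dvd_sub] at ht
  obtain ⟨s, hs⟩ := ht
  obtain ⟨x, hx⟩ := sq_two k (-s)
  refine ⟨((i * x : ℤ) : ZMod (2 ^ k)), ?_⟩
  have hz' : z = i ^ 2 * (1 + 8 * (-s)) := by
    have e1 : (d : ℤ) = 8 * i ^ 2 := by rw [hi, hz]; push_cast; ring
    have e2 : (z0 : ℤ) = i ^ 2 := by rw [hz]; push_cast; ring
    rw [e1, e2] at hs
    linear_combination -hs
  have : ((1 + 8 * (-s) - x ^ 2 : ℤ) : ZMod (2 ^ k)) = 0 := by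
    rw [ZMod.intCast_zmod_eq_zero_iff_dvd]
    exact_mod_cast hx
  have e : ((1 + 8 * (-s) : ℤ) : ZMod (2 ^ k)) = (x : ZMod (2 ^ k)) ^ 2 := by
    rw [Int.cast_sub, sub_eq_zero] at this
    rw [this]; push_cast; ring
  rw [hz', Int.cast_mul, e]
  push_cast; ring

lemma fin32 (a c : ZMod 32 → ℝ) (hac : ∀ r, a r ≤ c r) (hc : ∀ r, c r ≤ 1)
    (H1 : ∀ r r', r + r' = 1 ∨ r + r' = 9 ∨ r + r' = 17 ∨ r + r' = 25 ∨ r + r' = 4 → St (c r) (c r'))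
    (H2 : ∀ r r', r + r' = 16 → Mx (a r + a r') (c r) (c r'))
    (H3 : ∀ r r', r + r' = 0 → a r + a r' ≤ 1) : ∑ r, a r ≤ 11 := by
  rw [sum32]
  have e26 := E26 (a 2) (a 10) (a 18) (a 26) (a 6) (a 14) (a 22) (a 30)
    (c 2) (c 10) (c 18) (c 26) (c 6) (c 14) (c 22) (c 30)
    (hac _) (hac _) (hac _) (hac _) (hac _) (hac _) (hac _) (hac _)
    (hc _) (hc _) (hc _) (hc _) (hc _) (hc _)
    (H1 2 2 (by decide)).loop (H1 18 18 (by decide)).loop (H1 _ _ (by decide)) (H1 _ _ (by decide))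
    (H1 _ _ (by decide)) (H2 _ _ (by decide)) (H2 _ _ (by decide)) (H2 _ _ (by decide))
    (H2 _ _ (by decide)) (H3 _ _ (by decide)) (H3 _ _ (by decide)) (H3 _ _ (by decide))
    (H3 _ _ (by decide))
  have e04 := E04 (a 0) (a 8) (a 16) (a 24) (a 4) (a 12) (a 20) (a 28)
    (c 0) (c 8) (c 16) (c 24) (c 4) (c 12) (c 20) (c 28)
    (hac _) (hac _) (hac _) (hac _) (hac _) (hac _) (hac _) (hac _)
    (hc _) (hc _) (hc _) (hc _) (hc _) (hc _) (hc _) (hc _)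
    (H1 _ _ (by decide)) (H1 _ _ (by decide)) (H1 _ _ (by decide)) (H1 _ _ (by decide))
    (H2 _ _ (by decide)) (H2 _ _ (by decide)) (H2 _ _ (by decide)) (H2 _ _ (by decide))
    (H2 _ _ (by decide)) (H3 _ _ (by decide)) (H3 _ _ (by decide)) (H3 _ _ (by decide))
    (H3 _ _ (by decide)) (H3 _ _ (by decide))
  have caps : ∀ o e : Fin 4 → ZMod 32,
      (∀ i j, o i + e j = 1 ∨ o i + e j = 9 ∨ o i + e j = 17 ∨ o i + e j = 25 ∨ o i + e j = 4) →
      ∃ A E : ℝ, (∀ i, c (o i) ≤ A) ∧ (∀ i, c (e i) ≤ E) ∧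
      ((1/3 ≤ A ∧ A ≤ 1 ∧ 2*E = 1 - A) ∨ (1/3 ≤ E ∧ E ≤ 1 ∧ 2*A = 1 - E)) := by
    intro o e h
    exact pair_caps (fun i => c (o i)) (fun i => c (e i)) (fun i j => H1 _ _ (h i j))
      (fun i => hc _) (fun i => hc _)
  obtain ⟨C1, C0, q1, q0, p10⟩ := caps ![1, 9, 17, 25] ![0, 8, 16, 24] (by decide)
  obtain ⟨C3, C6, q3, q6, p36⟩ := caps ![3, 11, 19, 27] ![6, 14, 22, 30] (by decide)
  obtain ⟨C5, C4, q5, q4, p54⟩ := caps ![5, 13, 21, 29] ![4, 12, 20, 28] (by decide)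
  obtain ⟨C7, C2, q7, q2, p72⟩ := caps ![7, 15, 23, 31] ![2, 10, 18, 26] (by decide)
  have ex : ∀ (f : Fin 4 → ZMod 32) (C : ℝ), (∀ i, c (f i) ≤ C) →
      c (f 0) ≤ C ∧ c (f 1) ≤ C ∧ c (f 2) ≤ C ∧ c (f 3) ≤ C := fun f C h => ⟨h 0, h 1, h 2, h 3⟩
  replace q0 : c 0 ≤ C0 ∧ c 8 ≤ C0 ∧ c 16 ≤ C0 ∧ c 24 ≤ C0 := ex _ _ q0
  replace q1 : c 1 ≤ C1 ∧ c 9 ≤ C1 ∧ c 17 ≤ C1 ∧ c 25 ≤ C1 := ex _ _ q1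
  replace q2 : c 2 ≤ C2 ∧ c 10 ≤ C2 ∧ c 18 ≤ C2 ∧ c 26 ≤ C2 := ex _ _ q2
  replace q3 : c 3 ≤ C3 ∧ c 11 ≤ C3 ∧ c 19 ≤ C3 ∧ c 27 ≤ C3 := ex _ _ q3
  replace q4 : c 4 ≤ C4 ∧ c 12 ≤ C4 ∧ c 20 ≤ C4 ∧ c 28 ≤ C4 := ex _ _ q4
  replace q5 : c 5 ≤ C5 ∧ c 13 ≤ C5 ∧ c 21 ≤ C5 ∧ c 29 ≤ C5 := ex _ _ q5
  replace q6 : c 6 ≤ C6 ∧ c 14 ≤ C6 ∧ c 22 ≤ C6 ∧ c 30 ≤ C6 := ex _ _ q6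
  replace q7 : c 7 ≤ C7 ∧ c 15 ≤ C7 ∧ c 23 ≤ C7 ∧ c 31 ≤ C7 := ex _ _ q7
  obtain ⟨q01, q02, q03, q04⟩ := q0
  obtain ⟨q11, q12, q13, q14⟩ := q1
  obtain ⟨q21, q22, q23, q24⟩ := q2
  obtain ⟨q31, q32, q33, q34⟩ := q3
  obtain ⟨q41, q42, q43, q44⟩ := q4
  obtain ⟨q51, q52, q53, q54⟩ := q5
  obtain ⟨q61, q62, q63, q64⟩ := q6
  obtain ⟨q71, q72, q73, q74⟩ := q7
  have ss : ∀ (r r' : ZMod 32) (A B C : ℝ),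
      (r + r' = 1 ∨ r + r' = 9 ∨ r + r' = 17 ∨ r + r' = 25 ∨ r + r' = 4) → c r ≤ A → c r' ≤ B →
      1/3 ≤ C → A ≤ C → B ≤ C → a r + a r' ≤ (1 + C)/2 := by
    intro r r' A B C h h1 h2 h3 h4 h5
    have := (H1 r r' h).sum h3 (h1.trans h4) (h2.trans h5)
    linarith [hac r, hac r']
  have mm : ∀ (r r' : ZMod 32) (A B C : ℝ), r + r' = 16 → c r ≤ A → c r' ≤ B →
      1/3 ≤ C → A ≤ C → B ≤ C → a r + a r' ≤ (1 + C)/2 := by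
    intro r r' A B C h h1 h2 h3 h4 h5
    rcases H2 r r' h with ⟨h6, h7⟩ | ⟨h6, h7, h8⟩ | ⟨h6, h7, h8⟩ <;> linarith [hac r, hac r']
  have fin := Umain (a 0 + a 8 + a 16 + a 24) (a 1 + a 9 + a 17 + a 25) (a 2 + a 10 + a 18 + a 26)
    (a 3 + a 11 + a 19 + a 27) (a 4 + a 12 + a 20 + a 28) (a 5 + a 13 + a 21 + a 29)
    (a 6 + a 14 + a 22 + a 30) (a 7 + a 15 + a 23 + a 31) C0 C1 C2 C3 C4 C5 C6 C7
    (by linarith [hac 0, hac 8, hac 16, hac 24]) (by linarith [hac 1, hac 9, hac 17, hac 25])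
    (by linarith [hac 2, hac 10, hac 18, hac 26]) (by linarith [hac 3, hac 11, hac 19, hac 27])
    (by linarith [hac 4, hac 12, hac 20, hac 28]) (by linarith [hac 5, hac 13, hac 21, hac 29])
    (by linarith [hac 6, hac 14, hac 22, hac 30]) (by linarith [hac 7, hac 15, hac 23, hac 31])
    p10 p36 p54 p72
    (Mx_of _ _ _ fun C h1 h2 h3 => by
      have i1 := ss 1 3 _ _ C (by decide) q11 q31 h1 h2 h3
      have i2 := ss 9 27 _ _ C (by decide) q12 q34 h1 h2 h3
      have i3 := ss 17 19 _ _ C (by decide) q13 q33 h1 h2 h3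
      have i4 := ss 25 11 _ _ C (by decide) q14 q32 h1 h2 h3
      linarith)
    (Mx_of _ _ _ fun C h1 h2 h3 => by
      have i1 := ss 5 31 _ _ C (by decide) q51 q74 h1 h2 h3
      have i2 := ss 13 23 _ _ C (by decide) q52 q73 h1 h2 h3
      have i3 := ss 21 15 _ _ C (by decide) q53 q72 h1 h2 h3
      have i4 := ss 29 7 _ _ C (by decide) q54 q71 h1 h2 h3
      linarith)
    (Mx_of _ _ _ fun C h1 h2 h3 => by
      have i1 := mm 1 15 _ _ C (by decide) q11 q72 h1 h2 h3
      have i2 := mm 9 7 _ _ C (by decide) q12 q71 h1 h2 h3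
      have i3 := mm 17 31 _ _ C (by decide) q13 q74 h1 h2 h3
      have i4 := mm 25 23 _ _ C (by decide) q14 q73 h1 h2 h3
      linarith)
    (Mx_of _ _ _ fun C h1 h2 h3 => by
      have i1 := mm 3 13 _ _ C (by decide) q31 q52 h1 h2 h3
      have i2 := mm 11 5 _ _ C (by decide) q32 q51 h1 h2 h3
      have i3 := mm 19 29 _ _ C (by decide) q33 q54 h1 h2 h3
      have i4 := mm 27 21 _ _ C (by decide) q34 q53 h1 h2 h3
      linarith)
    (Mx_of _ _ _ fun C h1 h2 h3 => by
      have i1 := ss 0 4 _ _ C (by decide) q01 q41 h1 h2 h3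
      have i2 := ss 8 28 _ _ C (by decide) q02 q44 h1 h2 h3
      have i3 := ss 16 20 _ _ C (by decide) q03 q43 h1 h2 h3
      have i4 := ss 24 12 _ _ C (by decide) q04 q42 h1 h2 h3
      linarith)
    (by
      have i1 := H3 0 0 (by decide)
      have i2 := H3 16 16 (by decide)
      have i3 := H3 8 24 (by decide)
      linarith)
    (by
      have i1 := H3 4 28 (by decide)
      have i2 := H3 12 20 (by decide)
      linarith)
    (by linarith) (by linarith)
    (fun h => by
      have i1 := ss 10 26 _ _ C2 (by decide) q22 q24 h le_rfl le_rfl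
      have i2 := (H1 2 2 (by decide)).loop
      have i3 := (H1 18 18 (by decide)).loop
      linarith [hac 2, hac 18])
    (fun h => by
      have i1 := ss 6 30 _ _ C6 (by decide) q61 q64 h le_rfl le_rfl
      have i2 := ss 14 22 _ _ C6 (by decide) q62 q63 h le_rfl le_rfl
      linarith)
  linarith

lemma prod_case {Q : Type} [CommRing Q] [Fintype Q] [DecidableEq Q] (hQ : GoodW Q) (k : ℕ)
    (S : Finset (ZMod (2 ^ (k + 7)) × Q)) (hS : ∀ s ∈ S, ∀ s' ∈ S, ∀ x, s + s' ≠ x ^ 2) :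
    32 * S.card ≤ 11 * (2 ^ (k + 7) * Fintype.card Q) := by
  have d128 : 128 ∣ 2 ^ (k + 7) := ⟨2 ^ k, by ring⟩
  have d8 : 8 ∣ 2 ^ (k + 7) := ⟨2 ^ (k + 4), by ring⟩
  have d32' : 32 ∣ 2 ^ (k + 7) := ⟨2 ^ (k + 2), by ring⟩
  have d32 : 32 ∣ 128 := by norm_num
  have d832 : 8 ∣ 32 := by norm_num
  let f := ZMod.castHom d128 (ZMod 128)
  let g := ZMod.castHom d32 (ZMod 32)
  have hf : Function.Surjective f := ZMod.castHom_surjective d128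
  have hg : Function.Surjective g := ZMod.castHom_surjective d32
  have hgf : Function.Surjective (g.comp f) := hg.comp hf
  have e32 : g.comp f = ZMod.castHom d32' (ZMod 32) := Subsingleton.elim _ _
  have e8 : (ZMod.castHom d832 (ZMod 8)).comp (g.comp f) = ZMod.castHom d8 (ZMod 8) :=
    Subsingleton.elim _ _
  have main := fin32 (dn (g.comp f) S) (cp (g.comp f) S) (dn_le_cp _ hgf S) (cp_le_one _ S) ?_ ?_ ?_
  · rw [dn_sum, div_le_iff₀ (mul_pos (card_pos' _) (card_pos' _))] at main
    simp only [ZMod.card] at main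
    have h : S.card * 32 ≤ 11 * (2 ^ (k + 7) * Fintype.card Q) := by exact_mod_cast main
    omega
  · intro r r' hr
    refine cp_St hQ _ S hS r r' fun t ht => ?_
    have key : ∀ s : ZMod 32, (s = 1 ∨ s = 9 ∨ s = 17 ∨ s = 25 ∨ s = 4) →
        ZMod.castHom d832 (ZMod 8) s = 1 ∨ s = 4 := by
      rintro s (rfl | rfl | rfl | rfl | rfl)
      · left; rfl
      · left; rfl
      · left; rfl
      · left; rfl
      · right; rfl
    rcases key _ hr with h | h
    · refine sq_pow2 _ 8 1 1 d8 (by norm_num) (by norm_num) t ?_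
      rw [← e8, RingHom.comp_apply, ht, h]; simp
    · refine sq_pow2 _ 32 2 4 d32' (by norm_num) (by norm_num) t ?_
      rw [← e32, ht, h]; rfl
  · intro r r' hr
    refine dn_M hQ f hf g hg S hS 16 (fun t ht => ?_) r r' ?_
    · exact sq_pow2 _ 128 4 16 d128 (by norm_num) (by norm_num) t (by rw [ht]; rfl)
    · rw [hr]; rfl
  · intro r r' hr
    exact dn_zero _ hgf S hS r r' hr

theorem stmt_13 (q : ℕ) (hq : 0 < q) (S : Finset (ZMod q))
    (hcard : 11 * q < 32 * S.card) :
    ∃ s ∈ S, ∃ s' ∈ S, ∃ x : ZMod q, s + s' = x ^ 2 := by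
  classical
  by_contra hcon
  push Not at hcon
  obtain ⟨a, m, hm2, hqm⟩ := Nat.exists_eq_pow_mul_and_not_dvd hq.ne' 2 (by norm_num)
  have hm0 : m ≠ 0 := by rintro rfl; simp at hm2
  obtain ⟨b, n, hn3, hmn⟩ := Nat.exists_eq_pow_mul_and_not_dvd hm0 3 (by norm_num)
  have hn0 : n ≠ 0 := by rintro rfl; simp at hn3
  have hn2 : ¬ 2 ∣ n := fun h => hm2 (by rw [hmn]; exact h.mul_left _)
  have c2 : Nat.Coprime n 2 := ((Nat.Prime.coprime_iff_not_dvd Nat.prime_two).2 hn2).symm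
  have c3 : Nat.Coprime n 3 := ((Nat.Prime.coprime_iff_not_dvd Nat.prime_three).2 hn3).symm
  have cm : Nat.Coprime (2 ^ a) m :=
    Nat.Coprime.pow_left _ ((Nat.Prime.coprime_iff_not_dvd Nat.prime_two).2 hm2)
  have cn : Nat.Coprime (3 ^ b) n := Nat.Coprime.pow_left _ c3.symm
  haveI : NeZero n := ⟨hn0⟩
  haveI : NeZero m := ⟨hm0⟩
  haveI : NeZero q := ⟨hq.ne'⟩
  have hQ : GoodW (ZMod (3 ^ b) × ZMod n) := good_prod (good_three b) (good_n n c2 c3)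
  subst hmn
  subst hqm
  let e1 := ZMod.chineseRemainder cm
  let e2 := ZMod.chineseRemainder cn
  have hd : 2 ^ a ∣ 2 ^ (a + 7) := pow_dvd_pow _ (by omega)
  let p := ZMod.castHom hd (ZMod (2 ^ a))
  have hp : Function.Surjective p := ZMod.castHom_surjective hd
  let F : ZMod (2 ^ (a + 7)) × (ZMod (3 ^ b) × ZMod n) →+* ZMod (2 ^ a * (3 ^ b * n)) :=
    e1.symm.toRingHom.comp (RingHom.prodMap p e2.symm.toRingHom)
  have hF : Function.Surjective F := by
    intro y
    obtain ⟨⟨u, v⟩, rfl⟩ := e1.symm.surjective y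
    obtain ⟨u', rfl⟩ := hp u
    obtain ⟨v', rfl⟩ := e2.symm.surjective v
    exact ⟨(u', v'), rfl⟩
  let S' := Finset.univ.filter fun x => F x ∈ S
  have hS' : ∀ s ∈ S', ∀ s' ∈ S', ∀ x, s + s' ≠ x ^ 2 := by
    intro s hs s' hs' x hx
    refine hcon (F s) (Finset.mem_filter.1 hs).2 (F s') (Finset.mem_filter.1 hs').2 (F x) ?_
    rw [← map_add, hx, map_pow]
  have hb := prod_case hQ a S' hS'
  have hc : S'.card * (2 ^ a * (3 ^ b * n)) = S.card * (2 ^ (a + 7) * (3 ^ b * n)) := by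
    have h := Finset.card_eq_sum_card_fiberwise (f := F) (s := S') (t := S)
      (fun x hx => (Finset.mem_filter.1 hx).2)
    rw [h, Finset.sum_mul, ← smul_eq_mul (S.card), ← Finset.sum_const]
    refine Finset.sum_congr rfl fun u hu => ?_
    have h1 := fiber_card F.toAddMonoidHom hF u
    simp only [Fintype.card_prod, ZMod.card] at h1
    rw [← h1]
    congr 2
    ext x
    simp only [S', Finset.mem_filter, Finset.mem_univ, true_and]
    constructor
    · rintro ⟨_, h⟩; exact h
    · intro h
      have h' : F x = u := h
      exact ⟨by rw [h']; exact hu, h'⟩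
  simp only [Fintype.card_prod, ZMod.card] at hb
  have hpos : 0 < 2 ^ (a + 7) * (3 ^ b * n) := by positivity
  have h1 : 32 * S.card * (2 ^ (a + 7) * (3 ^ b * n)) ≤
      11 * (2 ^ a * (3 ^ b * n)) * (2 ^ (a + 7) * (3 ^ b * n)) := by
    calc _ = 32 * (S.card * (2 ^ (a + 7) * (3 ^ b * n))) := by ring
      _ = 32 * S'.card * (2 ^ a * (3 ^ b * n)) := by rw [← hc]; ring
      _ ≤ (11 * (2 ^ (a + 7) * (3 ^ b * n))) * (2 ^ a * (3 ^ b * n)) := Nat.mul_le_mul_right _ hb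
      _ = _ := by ring
  have := Nat.le_of_mul_le_mul_right h1 hpos
  omega
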